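/- Let N > 0, ε_κ ≥ 0, let m ≥ 1 be an integer, let k1, k2 be nonzero integers, and let σ > 0 be a real number. Set σ_p = σ + ε_κ(k1² + k2² + (mp)²) for p = 1, 2. If 1/(α_1 α_2) ≤ σ_1 σ_2 ≤ 2/(α_1 α_2), then σ obeys the two-sided bound: (m N²/2) · k2²(k1² + k2²)/(4N⁴m²(k1² + k2² + 4m²) + k2⁴) − ε_κ(k1² + k2² + 4m²) ≤ σ ≤ m N² · k2²(k1² + k2²)/(N⁴m²(k1² + k2² + m²) + k2⁴) − ε_κ(k1² + k2² + m²). -/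

import Mathlib

/-- The coefficients `α_p = 2(N⁴(mp)²(k1² + k2² + (mp)²) + k2⁴) / (m N² k2² (k1² + k2²))`. -/
noncomputable def alphaMG (N : ℝ) (m : ℕ) (k1 k2 : ℤ) (p : ℕ) : ℝ :=
  2 * (N ^ 4 * ((m : ℝ) * (p : ℝ)) ^ 2
        * ((k1 : ℝ) ^ 2 + (k2 : ℝ) ^ 2 + ((m : ℝ) * (p : ℝ)) ^ 2) + (k2 : ℝ) ^ 4)
    / ((m : ℝ) * N ^ 2 * (k2 : ℝ) ^ 2 * ((k1 : ℝ) ^ 2 + (k2 : ℝ) ^ 2))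

/-- A sequence `(c_p)_{p ≥ 1}` solves the MG eigenvalue recursion with shifts `(σ_p)` and
coefficients `(α_p)` if `σ_1 c_1 + c_2/α_2 = 0` and
`σ_p c_p + c_{p+1}/α_{p+1} + c_{p−1}/α_{p−1} = 0` for all `p ≥ 2`. -/
def SolvesMGRecursion (α σ c : ℕ → ℝ) : Prop :=
  σ 1 * c 1 + c 2 / α 2 = 0 ∧
  ∀ p : ℕ, 2 ≤ p → σ p * c p + c (p + 1) / α (p + 1) + c (p - 1) / α (p - 1) = 0

/-- A sequence `(c_p)_{p ≥ 1}` decays exponentially in `p` if there are `C > 0` and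
`λ ∈ (0,1)` with `|c_p| ≤ C λ^p` for all `p ≥ 1`. -/
def DecaysExponentially (c : ℕ → ℝ) : Prop :=
  ∃ C : ℝ, 0 < C ∧ ∃ lam : ℝ, lam ∈ Set.Ioo (0 : ℝ) 1 ∧ ∀ p : ℕ, 1 ≤ p → |c p| ≤ C * lam ^ p

/-!
When nonnegative numbers satisfy `a * b ≤ c * d`, the smaller factor on the left is at most the
larger factor on the right. Both `α_p` and `σ_p` increase with `p`, so
`(1 / α_1) * (1 / α_2) ≤ σ_1 * σ_2` gives `1 / α_2 ≤ σ_2`, and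
`σ_1 * σ_2 ≤ (2 / α_1) * (1 / α_2)` gives `σ_1 ≤ 2 / α_1`.
-/

theorem le_of_mul_le_mul_of_le_of_le {R : Type*} [Semiring R] [LinearOrder R]
    [IsStrictOrderedRing R] {a b c d : R} (hba : b ≤ a) (hcd : c ≤ d) (hd : 0 ≤ d)
    (h : a * b ≤ c * d) : b ≤ d := by
  by_contra! hdb
  have hb : 0 ≤ b := hd.trans hdb.le
  have hlt : c * d < a * b :=
    calc
      c * d ≤ d * d := mul_le_mul_of_nonneg_right hcd hd
      _ < b * b := mul_self_lt_mul_self hd hdb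
      _ ≤ a * b := mul_le_mul_of_nonneg_right hba hb
  exact hlt.not_ge h

section OrderedField

variable {𝕜 : Type*} [Field 𝕜] [LinearOrder 𝕜] [IsStrictOrderedRing 𝕜] {a₁ a₂ s₁ s₂ c : 𝕜}

theorem div_le_of_div_mul_le_mul (hc : c ≤ 1) (ha₁ : 0 < a₁) (ha : a₁ ≤ a₂) (hs : s₁ ≤ s₂)
    (hs₂ : 0 ≤ s₂) (h : c / (a₁ * a₂) ≤ s₁ * s₂) : c / a₂ ≤ s₂ := by
  have hle : c / a₂ ≤ 1 / a₁ := div_le_div₀ zero_le_one hc ha₁ ha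
  refine le_of_mul_le_mul_of_le_of_le hle hs hs₂ ?_
  calc
    1 / a₁ * (c / a₂) = c / (a₁ * a₂) := by rw [div_mul_div_comm, one_mul]
    _ ≤ s₁ * s₂ := h

theorem le_div_of_mul_le_div_mul (hc : 1 ≤ c) (ha₁ : 0 < a₁) (ha : a₁ ≤ a₂)
    (hs : s₁ ≤ s₂) (h : s₁ * s₂ ≤ c / (a₁ * a₂)) : s₁ ≤ c / a₁ := by
  have hc₀ : 0 ≤ c := zero_le_one.trans hc
  have hle : 1 / a₂ ≤ c / a₁ := div_le_div₀ hc₀ hc ha₁ ha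
  refine le_of_mul_le_mul_of_le_of_le hs hle (div_nonneg hc₀ ha₁.le) ?_
  calc
    s₂ * s₁ = s₁ * s₂ := mul_comm s₂ s₁
    _ ≤ c / (a₁ * a₂) := h
    _ = 1 / a₂ * (c / a₁) := by rw [div_mul_div_comm, one_mul, mul_comm a₂]

end OrderedField

/-- The shifted eigenvalue `σ_p = σ + ε_κ(k1² + k2² + (mp)²)`: the growth rate `σ` plus the
diffusive damping of the Fourier mode `(k1, k2, mp)`. -/
noncomputable def sigmaMG (σ εκ : ℝ) (m : ℕ) (k1 k2 : ℤ) (p : ℕ) : ℝ :=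
  σ + εκ * ((k1 : ℝ) ^ 2 + (k2 : ℝ) ^ 2 + ((m : ℝ) * (p : ℝ)) ^ 2)

theorem sigmaMG_monotone {εκ : ℝ} (hε : 0 ≤ εκ) (σ : ℝ) (m : ℕ) (k1 k2 : ℤ) :
    Monotone (sigmaMG σ εκ m k1 k2) := by
  intro p q hpq
  unfold sigmaMG
  gcongr

theorem sigmaMG_nonneg {σ εκ : ℝ} (hσ : 0 ≤ σ) (hε : 0 ≤ εκ) (m : ℕ) (k1 k2 : ℤ) (p : ℕ) :
    0 ≤ sigmaMG σ εκ m k1 k2 p := by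
  unfold sigmaMG
  positivity

theorem alphaMG_monotone (N : ℝ) (m : ℕ) (k1 k2 : ℤ) : Monotone (alphaMG N m k1 k2) := by
  intro p q hpq
  unfold alphaMG
  gcongr

theorem alphaMG_pos {N : ℝ} {m : ℕ} {k2 : ℤ} (hN : N ≠ 0) (hm : 0 < m) (hk2 : k2 ≠ 0)
    (k1 : ℤ) (p : ℕ) : 0 < alphaMG N m k1 k2 p := by
  unfold alphaMG
  positivity

theorem div_alphaMG (c N : ℝ) (m : ℕ) (k1 k2 : ℤ) (p : ℕ) :
    c / alphaMG N m k1 k2 p =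
      c * ((m : ℝ) * N ^ 2 / 2 * ((k2 : ℝ) ^ 2 * ((k1 : ℝ) ^ 2 + (k2 : ℝ) ^ 2))) /
        (N ^ 4 * ((m : ℝ) * (p : ℝ)) ^ 2
          * ((k1 : ℝ) ^ 2 + (k2 : ℝ) ^ 2 + ((m : ℝ) * (p : ℝ)) ^ 2) + (k2 : ℝ) ^ 4) := by
  rw [alphaMG, div_div_eq_mul_div, ← div_div]
  ring

theorem one_div_alphaMG_two (N : ℝ) (m : ℕ) (k1 k2 : ℤ) :
    1 / alphaMG N m k1 k2 2 =
      ((m : ℝ) * N ^ 2 / 2) * ((k2 : ℝ) ^ 2 * ((k1 : ℝ) ^ 2 + (k2 : ℝ) ^ 2))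
        / (4 * N ^ 4 * (m : ℝ) ^ 2 * ((k1 : ℝ) ^ 2 + (k2 : ℝ) ^ 2 + 4 * (m : ℝ) ^ 2)
            + (k2 : ℝ) ^ 4) := by
  rw [div_alphaMG]
  push_cast
  ring

theorem two_div_alphaMG_one (N : ℝ) (m : ℕ) (k1 k2 : ℤ) :
    2 / alphaMG N m k1 k2 1 =
      (m : ℝ) * N ^ 2 * ((k2 : ℝ) ^ 2 * ((k1 : ℝ) ^ 2 + (k2 : ℝ) ^ 2))
        / (N ^ 4 * (m : ℝ) ^ 2 * ((k1 : ℝ) ^ 2 + (k2 : ℝ) ^ 2 + (m : ℝ) ^ 2)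
            + (k2 : ℝ) ^ 4) := by
  rw [div_alphaMG]
  push_cast
  ring

theorem mg_eigenvalue_two_sided_bound_general {N εκ σ : ℝ} {m : ℕ} {k1 k2 : ℤ}
    (hN : N ≠ 0) (hε : 0 ≤ εκ) (hm : 0 < m) (hk2 : k2 ≠ 0)
    (hσ : 0 ≤ sigmaMG σ εκ m k1 k2 2)
    (hlow : 1 / (alphaMG N m k1 k2 1 * alphaMG N m k1 k2 2)
      ≤ sigmaMG σ εκ m k1 k2 1 * sigmaMG σ εκ m k1 k2 2)
    (hhigh : sigmaMG σ εκ m k1 k2 1 * sigmaMG σ εκ m k1 k2 2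
      ≤ 2 / (alphaMG N m k1 k2 1 * alphaMG N m k1 k2 2)) :
    ((m : ℝ) * N ^ 2 / 2) * ((k2 : ℝ) ^ 2 * ((k1 : ℝ) ^ 2 + (k2 : ℝ) ^ 2))
        / (4 * N ^ 4 * (m : ℝ) ^ 2 * ((k1 : ℝ) ^ 2 + (k2 : ℝ) ^ 2 + 4 * (m : ℝ) ^ 2)
            + (k2 : ℝ) ^ 4)
        - εκ * ((k1 : ℝ) ^ 2 + (k2 : ℝ) ^ 2 + 4 * (m : ℝ) ^ 2) ≤ σ
    ∧ σ ≤ (m : ℝ) * N ^ 2 * ((k2 : ℝ) ^ 2 * ((k1 : ℝ) ^ 2 + (k2 : ℝ) ^ 2))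
        / (N ^ 4 * (m : ℝ) ^ 2 * ((k1 : ℝ) ^ 2 + (k2 : ℝ) ^ 2 + (m : ℝ) ^ 2)
            + (k2 : ℝ) ^ 4)
        - εκ * ((k1 : ℝ) ^ 2 + (k2 : ℝ) ^ 2 + (m : ℝ) ^ 2) := by
  have hα₁ := alphaMG_pos hN hm hk2 k1 1
  have hα := alphaMG_monotone N m k1 k2 one_le_two
  have hσ₁₂ := sigmaMG_monotone hε σ m k1 k2 one_le_two
  have hlower : 1 / alphaMG N m k1 k2 2 ≤ sigmaMG σ εκ m k1 k2 2 :=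
    div_le_of_div_mul_le_mul le_rfl hα₁ hα hσ₁₂ hσ hlow
  have hupper : sigmaMG σ εκ m k1 k2 1 ≤ 2 / alphaMG N m k1 k2 1 :=
    le_div_of_mul_le_div_mul one_le_two hα₁ hα hσ₁₂ hhigh
  rw [one_div_alphaMG_two] at hlower
  rw [two_div_alphaMG_one] at hupper
  constructor
  · rw [sub_le_iff_le_add]
    exact hlower.trans_eq (by rw [sigmaMG]; push_cast; ring)
  · rw [le_sub_iff_add_le]
    exact hupper.trans_eq' (by rw [sigmaMG]; push_cast; ring)

/-- **Two-sided bound on the eigenvalue from the continued-fraction estimate:** let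
`N > 0`, `ε_κ ≥ 0`, `m ≥ 1` an integer, `k1, k2` nonzero integers, `σ > 0`, and set
`σ_p = σ + ε_κ(k1² + k2² + (mp)²)` for `p = 1,2`.  If `1/(α_1α_2) ≤ σ_1σ_2 ≤ 2/(α_1α_2)`
then
`(mN²/2)·k2²(k1²+k2²)/(4N⁴m²(k1²+k2²+4m²)+k2⁴) − ε_κ(k1²+k2²+4m²) ≤ σ` and
`σ ≤ mN²·k2²(k1²+k2²)/(N⁴m²(k1²+k2²+m²)+k2⁴) − ε_κ(k1²+k2²+m²)`. -/
theorem mg_eigenvalue_two_sided_bound (N εκ σ : ℝ) (hN : 0 < N) (hε : 0 ≤ εκ)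
    (m : ℕ) (hm : 1 ≤ m) (k1 k2 : ℤ) (hk1 : k1 ≠ 0) (hk2 : k2 ≠ 0) (hσ : 0 < σ)
    (hlow : 1 / (alphaMG N m k1 k2 1 * alphaMG N m k1 k2 2)
      ≤ (σ + εκ * ((k1 : ℝ) ^ 2 + (k2 : ℝ) ^ 2 + ((m : ℝ) * 1) ^ 2))
        * (σ + εκ * ((k1 : ℝ) ^ 2 + (k2 : ℝ) ^ 2 + ((m : ℝ) * 2) ^ 2)))
    (hhigh : (σ + εκ * ((k1 : ℝ) ^ 2 + (k2 : ℝ) ^ 2 + ((m : ℝ) * 1) ^ 2))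
        * (σ + εκ * ((k1 : ℝ) ^ 2 + (k2 : ℝ) ^ 2 + ((m : ℝ) * 2) ^ 2))
      ≤ 2 / (alphaMG N m k1 k2 1 * alphaMG N m k1 k2 2)) :
    ((m : ℝ) * N ^ 2 / 2) * ((k2 : ℝ) ^ 2 * ((k1 : ℝ) ^ 2 + (k2 : ℝ) ^ 2))
        / (4 * N ^ 4 * (m : ℝ) ^ 2 * ((k1 : ℝ) ^ 2 + (k2 : ℝ) ^ 2 + 4 * (m : ℝ) ^ 2)
            + (k2 : ℝ) ^ 4)
        - εκ * ((k1 : ℝ) ^ 2 + (k2 : ℝ) ^ 2 + 4 * (m : ℝ) ^ 2) ≤ σ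
    ∧ σ ≤ (m : ℝ) * N ^ 2 * ((k2 : ℝ) ^ 2 * ((k1 : ℝ) ^ 2 + (k2 : ℝ) ^ 2))
        / (N ^ 4 * (m : ℝ) ^ 2 * ((k1 : ℝ) ^ 2 + (k2 : ℝ) ^ 2 + (m : ℝ) ^ 2)
            + (k2 : ℝ) ^ 4)
        - εκ * ((k1 : ℝ) ^ 2 + (k2 : ℝ) ^ 2 + (m : ℝ) ^ 2) := by
  refine mg_eigenvalue_two_sided_bound_general hN.ne' hε hm hk2 (sigmaMG_nonneg hσ.le hε ..) ?_ ?_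
  · simpa only [sigmaMG, Nat.cast_one, Nat.cast_ofNat] using hlow
  · simpa only [sigmaMG, Nat.cast_one, Nat.cast_ofNat] using hhigh
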